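/- Let f_i : ℝ^d → ℝ, i ∈ {1,…,n}, be twice continuously differentiable with ‖∇²f_i(x) − ∇²f_i(y)‖ ≤ H‖x − y‖ (spectral norm), let f := (1/n)Σ_i f_i be μ-strongly convex (μ > 0), and let x* satisfy ∇f(x*) = 0. For each i, let {B_i^{jl} : j,l ∈ [d]} be real d×d matrices with ‖B_i^{jl}‖_F ≤ R and let ℓ_i : ℝ^d → ℝ^{d×d} satisfy ∇²f_i(x) = Σ_{j,l} (ℓ_i(x))_{jl} B_i^{jl} for all x and ‖ℓ_i(x) − ℓ_i(y)‖_F ≤ M₁‖x − y‖. Set N_B := 1 if for every i the family {B_i^{jl}} is pairwise orthogonal in the Frobenius inner product, and N_B := d² otherwise. Fix 0 < δ ≤ 1 and set A := δ/4, B := 6/δ − 7/2, A_M := 1/4, B_M := 5/2. Consider sequences x^k ∈ ℝ^d and L_i^k ∈ ℝ^{d×d} generated by: L_i^{k+1} = L_i^k + S_i^k where ‖S_i^k − (ℓ_i(x^k) − L_i^k)‖_F² ≤ (1 − δ)‖ℓ_i(x^k) − L_i^k‖_F²; H^k := (1/n)Σ_i Σ_{j,l} (L_i^k)_{jl} B_i^{jl};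 Ĥ^k a symmetric matrix with Ĥ^k ⪰ μI and ‖Ĥ^k − ∇²f(x*)‖_F ≤ ‖H^k − ∇²f(x*)‖_F; x^{k+1} := x^k − (Ĥ^k)⁻¹ ∇f(x^k). Define 𝓗^k := (1/n)Σ_i ‖L_i^k − ℓ_i(x*)‖_F², Φ₂^k := 𝓗^k + (4BM₁²/A_M)‖x^k − x*‖², and θ₁ := 1 − min{4A, A_M}/4. If for every k ≥ 0 one has ‖x^k − x*‖² ≤ A_M μ²/(4H² B_M) and 𝓗^k ≤ A_M μ²/(16 N_B R² B_M), then: (a) Φ₂^k ≤ θ₁^k Φ₂⁰ for all k ≥ 0; and (b) if moreover x^k ≠ x* for all k, then ‖x^{k+1} − x*‖² / ‖x^k − x*‖² ≤ θ₁^k ( A_M H²/(8BM₁²μ²) + 2N_B R²/μ² ) Φ₂⁰ for all k ≥ 0, so the convergence of x^k to x* is superlinear. -/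

import Mathlib

open Matrix Classical

/-- Frobenius inner product of matrices. -/
noncomputable def frobInner {d : ℕ} (M N : Matrix (Fin d) (Fin d) ℝ) : ℝ :=
  ∑ s, ∑ t, M s t * N s t

/-- Frobenius norm squared: sum of squares of all entries. -/
noncomputable def frobSq {d : ℕ} (M : Matrix (Fin d) (Fin d) ℝ) : ℝ :=
  ∑ i, ∑ j, (M i j) ^ 2

/-- Frobenius norm. -/
noncomputable def frobNorm {d : ℕ} (M : Matrix (Fin d) (Fin d) ℝ) : ℝ :=
  Real.sqrt (frobSq M)

/-- Spectral norm (operator 2-norm) of a matrix. -/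
noncomputable def specNorm {d : ℕ} (M : Matrix (Fin d) (Fin d) ℝ) : ℝ :=
  ‖Matrix.toEuclideanCLM (𝕜 := ℝ) M‖

/-- The Hessian matrix of `f` at `x` (the derivative of the gradient). -/
noncomputable def hess {d : ℕ} (f : EuclideanSpace ℝ (Fin d) → ℝ)
    (x : EuclideanSpace ℝ (Fin d)) : Matrix (Fin d) (Fin d) ℝ :=
  fun j l => fderiv ℝ (gradient f) x (EuclideanSpace.single l 1) j


noncomputable def fvec {d : ℕ} : Matrix (Fin d) (Fin d) ℝ →ₗ[ℝ] EuclideanSpace ℝ (Fin d × Fin d) where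
  toFun M := WithLp.toLp 2 (fun p => M p.1 p.2)
  map_add' := by intro M N; ext p; simp
  map_smul' := by intro c M; ext p; simp

lemma frobSq_eq {d : ℕ} (M : Matrix (Fin d) (Fin d) ℝ) : frobSq M = ‖fvec M‖ ^ 2 := by
  rw [EuclideanSpace.norm_sq_eq, Fintype.sum_prod_type]
  simp [frobSq, fvec]

lemma frobNorm_eq {d : ℕ} (M : Matrix (Fin d) (Fin d) ℝ) : frobNorm M = ‖fvec M‖ := by
  rw [frobNorm, frobSq_eq, Real.sqrt_sq (norm_nonneg _)]

lemma frobInner_eq {d : ℕ} (M N : Matrix (Fin d) (Fin d) ℝ) :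
    frobInner M N = inner ℝ (fvec M) (fvec N) := by
  rw [PiLp.inner_apply, Fintype.sum_prod_type]
  simp [frobInner, fvec, mul_comm]

lemma comb_orth {ι E : Type*} [Fintype ι] [NormedAddCommGroup E] [InnerProductSpace ℝ E]
    (c : ι → ℝ) (b : ι → E) (R : ℝ) (hb : ∀ p, ‖b p‖ ≤ R)
    (ho : ∀ p q, p ≠ q → inner ℝ (b p) (b q) = 0) :
    ‖∑ p, c p • b p‖ ^ 2 ≤ R ^ 2 * ∑ p, c p ^ 2 := by
  rw [← real_inner_self_eq_norm_sq, sum_inner, Finset.mul_sum]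
  apply Finset.sum_le_sum
  intro p _
  rw [inner_sum, Finset.sum_eq_single p]
  · rw [inner_smul_left, inner_smul_right, real_inner_self_eq_norm_sq]
    have h1 : ‖b p‖ ^ 2 ≤ R ^ 2 := pow_le_pow_left₀ (norm_nonneg _) (hb p) 2
    simp only [conj_trivial]
    nlinarith [mul_le_mul_of_nonneg_right h1 (sq_nonneg (c p))]
  · intro q _ hq
    rw [inner_smul_left, inner_smul_right, ho p q (Ne.symm hq)]; simp
  · simp

lemma comb_gen {ι E : Type*} [Fintype ι] [NormedAddCommGroup E] [InnerProductSpace ℝ E]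
    (c : ι → ℝ) (b : ι → E) (R : ℝ) (hb : ∀ p, ‖b p‖ ≤ R) :
    ‖∑ p, c p • b p‖ ^ 2 ≤ (Fintype.card ι : ℝ) * R ^ 2 * ∑ p, c p ^ 2 := by
  have h1 : ‖∑ p, c p • b p‖ ≤ ∑ p, |c p| * R := by
    refine (norm_sum_le _ _).trans (Finset.sum_le_sum fun p _ => ?_)
    rw [norm_smul, Real.norm_eq_abs]
    exact mul_le_mul_of_nonneg_left (hb p) (abs_nonneg _)
  have h2 := pow_le_pow_left₀ (norm_nonneg _) h1 2
  have h3 := sq_sum_le_card_mul_sum_sq (s := (Finset.univ : Finset ι)) (f := fun p => |c p| * R)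
  refine h2.trans (h3.trans (le_of_eq ?_))
  simp only [mul_pow, sq_abs, ← Finset.sum_mul, Finset.card_univ]
  ring

lemma avg_sq {n : ℕ} (hn : 1 ≤ n) {E : Type*} [NormedAddCommGroup E] [InnerProductSpace ℝ E]
    (v : Fin n → E) :
    ‖(1 / (n : ℝ)) • ∑ i, v i‖ ^ 2 ≤ (1 / (n : ℝ)) * ∑ i, ‖v i‖ ^ 2 := by
  have hn' : (0 : ℝ) < n := by exact_mod_cast hn
  have h2 := pow_le_pow_left₀ (norm_nonneg _) (norm_sum_le Finset.univ v) 2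
  have h3 := sq_sum_le_card_mul_sum_sq (s := (Finset.univ : Finset (Fin n))) (f := fun p => ‖v p‖)
  rw [norm_smul, mul_pow, Real.norm_eq_abs, sq_abs]
  have h4 := h2.trans h3
  simp only [Finset.card_univ, Fintype.card_fin] at h4
  calc (1 / (n : ℝ)) ^ 2 * ‖∑ i, v i‖ ^ 2 ≤ (1 / (n : ℝ)) ^ 2 * (n * ∑ i, ‖v i‖ ^ 2) := by gcongr
    _ = _ := by field_simp

lemma clm_le_frob {d : ℕ} (M : Matrix (Fin d) (Fin d) ℝ) (v : EuclideanSpace ℝ (Fin d)) :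
    ‖Matrix.toEuclideanCLM (𝕜 := ℝ) M v‖ ≤ ‖fvec M‖ * ‖v‖ := by
  refine (sq_le_sq₀ (norm_nonneg _) (by positivity)).1 ?_
  rw [mul_pow, ← frobSq_eq, EuclideanSpace.norm_sq_eq, EuclideanSpace.norm_sq_eq, frobSq,
    Finset.sum_mul]
  apply Finset.sum_le_sum
  intro i _
  rw [Matrix.ofLp_toEuclideanCLM]
  simp only [Matrix.mulVec, dotProduct, Real.norm_eq_abs, sq_abs]
  exact Finset.sum_mul_sq_le_sq_mul_sq _ _ _

lemma posdef_lower {d : ℕ} (A : Matrix (Fin d) (Fin d) ℝ) (μ : ℝ)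
    (h : (A - μ • (1 : Matrix (Fin d) (Fin d) ℝ)).PosSemidef) (v : EuclideanSpace ℝ (Fin d)) :
    μ * ‖v‖ ≤ ‖Matrix.toEuclideanCLM (𝕜 := ℝ) A v‖ := by
  have h1 := h.dotProduct_mulVec_nonneg v.ofLp
  have h2 : inner ℝ v (Matrix.toEuclideanCLM (𝕜 := ℝ)
      (A - μ • (1 : Matrix (Fin d) (Fin d) ℝ)) v) ≥ 0 := by
    rw [Matrix.inner_toEuclideanCLM]; simpa using h1
  rw [map_sub, map_smul, map_one] at h2
  simp only [_root_.sub_apply, inner_sub_right, _root_.smul_apply,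
    one_apply_eq_self, inner_smul_right, real_inner_self_eq_norm_sq] at h2
  have h3 := real_inner_le_norm v (Matrix.toEuclideanCLM (𝕜 := ℝ) A v)
  rcases (norm_nonneg v).eq_or_lt with h0 | h0
  · rw [← h0]; simp
  · have : ‖v‖ * (μ * ‖v‖) ≤ ‖v‖ * ‖Matrix.toEuclideanCLM (𝕜 := ℝ) A v‖ := by nlinarith
    exact le_of_mul_le_mul_left this h0

lemma posdef_inv {d : ℕ} (A : Matrix (Fin d) (Fin d) ℝ) (μ : ℝ) (hμ : 0 < μ)
    (h : (A - μ • (1 : Matrix (Fin d) (Fin d) ℝ)).PosSemidef) : A * A⁻¹ = 1 := by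
  have hp : A.PosDef := by
    have := (Matrix.PosDef.one (n := Fin d) (R := ℝ)).smul hμ |>.add_posSemidef h
    simpa using this
  exact Matrix.mul_nonsing_inv _ ((Matrix.isUnit_iff_isUnit_det _).1 hp.isUnit)

lemma grad_contDiff {d : ℕ} (f : EuclideanSpace ℝ (Fin d) → ℝ) (hf : ContDiff ℝ 2 f) :
    ContDiff ℝ 1 (gradient f) := by
  unfold gradient
  exact (InnerProductSpace.toDual ℝ (EuclideanSpace ℝ (Fin d))).symm.contDiff.comp
    (hf.fderiv_right (m := 1) (by norm_num))

lemma hess_clm {d : ℕ} (f : EuclideanSpace ℝ (Fin d) → ℝ) (x : EuclideanSpace ℝ (Fin d)) :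
    Matrix.toEuclideanCLM (𝕜 := ℝ) (hess f x) = fderiv ℝ (gradient f) x := by
  apply ContinuousLinearMap.coe_injective
  refine (EuclideanSpace.basisFun (Fin d) ℝ).toBasis.ext fun i => ?_
  ext j
  simp [Matrix.ofLp_toEuclideanCLM, hess]

lemma hess_avg {d n : ℕ} (f : Fin n → EuclideanSpace ℝ (Fin d) → ℝ)
    (hf : ∀ i, ContDiff ℝ 2 (f i)) (x : EuclideanSpace ℝ (Fin d)) :
    hess (fun x => (1 / (n : ℝ)) * ∑ i, f i x) x = (1 / (n : ℝ)) • ∑ i, hess (f i) x := by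
  have h1 : gradient (fun x => (1 / (n : ℝ)) * ∑ i, f i x)
      = fun x => (1 / (n : ℝ)) • ∑ i, gradient (f i) x := by
    funext y
    have hd : ∀ i ∈ Finset.univ, DifferentiableAt ℝ (f i) y := fun i _ =>
      (hf i).differentiable (by norm_num) y
    unfold gradient
    rw [fderiv_const_mul (DifferentiableAt.fun_sum hd), fderiv_fun_sum hd, map_smulₛₗ, map_sum]
    simp
  have hd : ∀ i ∈ Finset.univ, DifferentiableAt ℝ (gradient (f i)) x := fun i _ =>
      (grad_contDiff _ (hf i)).differentiable (by norm_num) x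
  ext j l
  simp only [hess, h1]
  rw [fderiv_fun_const_smul (DifferentiableAt.fun_sum hd), fderiv_fun_sum hd]
  simp [Matrix.sum_apply, hess]

lemma taylor {E : Type*} [NormedAddCommGroup E] [NormedSpace ℝ E] (G : E → E)
    (hG : Differentiable ℝ G) (H : ℝ) (x y : E)
    (hH : ∀ z, ‖fderiv ℝ G z - fderiv ℝ G y‖ ≤ H * ‖z - y‖) :
    ‖G x - G y - fderiv ℝ G y (x - y)‖ ≤ H / 2 * ‖x - y‖ ^ 2 := by
  set v := x - y with hv
  have hd : ∀ t : ℝ, HasDerivAt (fun t : ℝ => G (y + t • v) - G y - t • fderiv ℝ G y v)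
      ((fderiv ℝ G (y + t • v) - fderiv ℝ G y) v) t := by
    intro t
    have h1 : HasDerivAt (fun t : ℝ => y + t • v) v t := by
      simpa using ((hasDerivAt_id t).smul_const v).const_add y
    have h2 := (hG (y + t • v)).hasFDerivAt.comp_hasDerivAt t h1
    have h3 : HasDerivAt (fun t : ℝ => t • fderiv ℝ G y v) (fderiv ℝ G y v) t := by
      simpa using (hasDerivAt_id t).smul_const (fderiv ℝ G y v)
    simpa using (h2.sub_const (G y)).fun_sub h3
  have hB : ∀ t : ℝ, HasDerivAt (fun t : ℝ => H / 2 * ‖v‖ ^ 2 * t ^ 2) (H * ‖v‖ ^ 2 * t) t := by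
    intro t
    have := (hasDerivAt_pow 2 t).const_mul (H / 2 * ‖v‖ ^ 2)
    exact this.congr_deriv (by norm_num; ring)
  have := image_norm_le_of_norm_deriv_right_le_deriv_boundary (a := 0) (b := 1)
    (fun t _ => (hd t).continuousAt.continuousWithinAt)
    (fun t _ => (hd t).hasDerivWithinAt) (by simp) hB (by
      intro t ht
      refine (ContinuousLinearMap.le_opNorm _ _).trans ?_
      have h1 := hH (y + t • v)
      rw [add_sub_cancel_left, norm_smul, Real.norm_eq_abs, abs_of_nonneg ht.1] at h1
      nlinarith [mul_le_mul_of_nonneg_right h1 (norm_nonneg v)])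
    (Set.right_mem_Icc.2 zero_le_one)
  simpa [hv] using this

lemma contr {E : Type*} [NormedAddCommGroup E] [NormedSpace ℝ E] (δ : ℝ) (hδ0 : 0 < δ)
    (hδ1 : δ ≤ 1) (p a s : E) (h : ‖s - (a - p)‖ ^ 2 ≤ (1 - δ) * ‖a - p‖ ^ 2) :
    ‖p + s‖ ^ 2 ≤ (1 - δ / 4) * ‖p‖ ^ 2 + (6 / δ - 7 / 2) * ‖a‖ ^ 2 := by
  obtain ⟨c, hc0, hc⟩ : ∃ c : ℝ, 0 ≤ c ∧ c ^ 2 = 1 - δ :=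
    ⟨Real.sqrt (1 - δ), Real.sqrt_nonneg _, Real.sq_sqrt (by linarith)⟩
  have h1 : ‖s - (a - p)‖ ≤ c * ‖a - p‖ := by
    refine (sq_le_sq₀ (norm_nonneg _) (by positivity)).1 ?_
    rw [mul_pow, hc]; exact h
  have h2 : ‖a - p‖ ≤ ‖a‖ + ‖p‖ := norm_sub_le _ _
  have h3 : ‖p + s‖ ≤ ‖s - (a - p)‖ + ‖a‖ := by
    have : p + s = (s - (a - p)) + a := by abel
    rw [this]; exact norm_add_le _ _
  have h4 : ‖p + s‖ ≤ c * ‖p‖ + (1 + c) * ‖a‖ := by nlinarith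
  have h5 := pow_le_pow_left₀ (norm_nonneg _) h4 2
  refine h5.trans ?_
  have hc1 : c ≤ 1 - δ / 2 := by nlinarith
  have key : (1 + c) ^ 2 * (4 - δ) ≤ 18 - 21 / 2 * δ := by nlinarith
  generalize ‖p‖ = P
  generalize ‖a‖ = a
  -- multiply by 3δ/(4-δ) ...
  have e : 6 / δ - 7 / 2 = (12 - 7 * δ) / (2 * δ) := by field_simp; ring
  have hB : (1 + c) ^ 2 * (4 - δ) / (3 * δ) ≤ 6 / δ - 7 / 2 := by
    rw [e, div_le_div_iff₀ (by positivity) (by positivity)]; nlinarith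
  have h6 : (c * P + (1 + c) * a) ^ 2 ≤ (1 - δ / 4) * P ^ 2
      + (1 + c) ^ 2 * (4 - δ) / (3 * δ) * a ^ 2 := by
    have : (1 - δ / 4) * P ^ 2 + (1 + c) ^ 2 * (4 - δ) / (3 * δ) * a ^ 2
        - (c * P + (1 + c) * a) ^ 2 = (3 * δ * P / 2 - 2 * c * (1 + c) * a) ^ 2 / (3 * δ) := by
      have hδ : δ = 1 - c ^ 2 := by linarith
      have : 1 - c ^ 2 ≠ 0 := by rw [← hδ]; exact hδ0.ne'
      rw [hδ]; field_simp; ring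
    have h7 : 0 ≤ (3 * δ * P / 2 - 2 * c * (1 + c) * a) ^ 2 / (3 * δ) := by positivity
    linarith
  nlinarith [mul_le_mul_of_nonneg_right hB (sq_nonneg a)]

lemma newton {d : ℕ} (g : EuclideanSpace ℝ (Fin d) → ℝ) (hg : ContDiff ℝ 2 g)
    (μ : ℝ) (hμ : 0 < μ) (xs x y : EuclideanSpace ℝ (Fin d)) (hs : gradient g xs = 0)
    (A : Matrix (Fin d) (Fin d) ℝ)
    (hA : (A - μ • (1 : Matrix (Fin d) (Fin d) ℝ)).PosSemidef)
    (H D : ℝ) (hH : ∀ z, specNorm (hess g z - hess g xs) ≤ H * ‖z - xs‖)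
    (hD : frobNorm (A - hess g xs) ^ 2 ≤ D)
    (hy : y = x - Matrix.toEuclideanCLM (𝕜 := ℝ) A⁻¹ (gradient g x)) :
    ‖y - xs‖ ^ 2 ≤ ‖x - xs‖ ^ 2 / μ ^ 2 * (2 * D + H ^ 2 * ‖x - xs‖ ^ 2 / 2) := by
  have hT := taylor (gradient g) ((grad_contDiff g hg).differentiable (by norm_num)) H x xs (by
    intro z
    have := hH z
    rwa [specNorm, map_sub, hess_clm, hess_clm] at this)
  rw [hs, sub_zero, ← hess_clm] at hT
  have h1 : Matrix.toEuclideanCLM (𝕜 := ℝ) A (y - xs)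
      = Matrix.toEuclideanCLM (𝕜 := ℝ) (A - hess g xs) (x - xs)
        - (gradient g x - Matrix.toEuclideanCLM (𝕜 := ℝ) (hess g xs) (x - xs)) := by
    have h2 : Matrix.toEuclideanCLM (𝕜 := ℝ) A (Matrix.toEuclideanCLM (𝕜 := ℝ) A⁻¹ (gradient g x))
        = gradient g x := by
      rw [← ContinuousLinearMap.mul_apply, ← map_mul, posdef_inv A μ hμ hA, map_one]; rfl
    rw [hy, map_sub, map_sub, h2, map_sub (Matrix.toEuclideanCLM (𝕜 := ℝ)), _root_.sub_apply]
    simp only [map_sub]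
    abel
  have h2 := posdef_lower A μ hA (y - xs)
  rw [h1] at h2
  have h3 := h2.trans (norm_sub_le _ _)
  have h4 := clm_le_frob (A - hess g xs) (x - xs)
  rw [frobNorm_eq] at hD
  set r := ‖x - xs‖
  set F := ‖fvec (A - hess g xs)‖
  have h5 : μ * ‖y - xs‖ ≤ F * r + H / 2 * r ^ 2 := by linarith
  have h6 := pow_le_pow_left₀ (by positivity) h5 2
  have h7 : (F * r + H / 2 * r ^ 2) ^ 2 ≤ r ^ 2 * (2 * D + H ^ 2 * r ^ 2 / 2) := by
    nlinarith [sq_nonneg (F * r - H / 2 * r ^ 2), mul_le_mul_of_nonneg_right hD (sq_nonneg r)]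
  rw [div_mul_eq_mul_div, le_div_iff₀ (by positivity)]
  nlinarith

lemma nb_bound {d n : ℕ} (hn : 1 ≤ n) (R : ℝ)
    (B : Fin n → Fin d → Fin d → Matrix (Fin d) (Fin d) ℝ)
    (hBR : ∀ i j l, frobNorm (B i j l) ≤ R)
    (NB : ℝ)
    (hNB : NB = if (∀ i (j l j' l' : Fin d), (j, l) ≠ (j', l') →
        frobInner (B i j l) (B i j' l') = 0) then (1 : ℝ) else (d : ℝ) ^ 2)
    (C : Fin n → Matrix (Fin d) (Fin d) ℝ) :
    frobNorm ((1 / (n : ℝ)) • ∑ i, ∑ j, ∑ l, (C i) j l • B i j l) ^ 2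
      ≤ NB * R ^ 2 * ((1 / (n : ℝ)) * ∑ i, frobSq (C i)) := by
  rw [frobNorm_eq, map_smul, map_sum]
  refine (avg_sq hn _).trans ?_
  rw [mul_left_comm]
  refine mul_le_mul_of_nonneg_left ?_ (by positivity)
  rw [Finset.mul_sum]
  apply Finset.sum_le_sum
  intro i _
  have e1 : fvec (∑ j, ∑ l, (C i) j l • B i j l)
      = ∑ p : Fin d × Fin d, (C i p.1 p.2) • fvec (B i p.1 p.2) := by
    rw [Fintype.sum_prod_type]; simp only [map_sum, map_smul]
  have e2 : frobSq (C i) = ∑ p : Fin d × Fin d, (C i p.1 p.2) ^ 2 := by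
    rw [Fintype.sum_prod_type]; rfl
  rw [e1, e2]
  have hb : ∀ p : Fin d × Fin d, ‖fvec (B i p.1 p.2)‖ ≤ R := fun p => by
    rw [← frobNorm_eq]; exact hBR _ _ _
  split_ifs at hNB with h
  · rw [hNB, one_mul]
    refine comb_orth _ _ R hb fun p q hpq => ?_
    rw [← frobInner_eq]; exact h i _ _ _ _ hpq
  · have := comb_gen (fun p : Fin d × Fin d => C i p.1 p.2) _ R hb
    rw [hNB]
    simpa [sq] using this

/-- Theorem 4.9 (superlinear convergence of BL1), in the branch with identity model
compression, `ξ^k ≡ 1`, and deterministic contraction compressors for the Hessians. -/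
theorem bl1_superlinear_convergence (d n : ℕ) (hn : 1 ≤ n)
    (f : Fin n → EuclideanSpace ℝ (Fin d) → ℝ)
    (hf : ∀ i, ContDiff ℝ 2 (f i))
    (μ : ℝ) (hμ : 0 < μ)
    (fbar : EuclideanSpace ℝ (Fin d) → ℝ)
    (hfbar : fbar = fun x => (1 / (n : ℝ)) * ∑ i, f i x)
    (hsc : ∀ x, ((hess fbar x) - μ • (1 : Matrix (Fin d) (Fin d) ℝ)).PosSemidef)
    (H : ℝ)
    (hH : ∀ i x y, specNorm (hess (f i) x - hess (f i) y) ≤ H * ‖x - y‖)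
    (xstar : EuclideanSpace ℝ (Fin d)) (hstar : gradient fbar xstar = 0)
    (R : ℝ) (B : Fin n → Fin d → Fin d → Matrix (Fin d) (Fin d) ℝ)
    (hBR : ∀ i j l, frobNorm (B i j l) ≤ R)
    (ℓ : Fin n → EuclideanSpace ℝ (Fin d) → Matrix (Fin d) (Fin d) ℝ)
    (hrep : ∀ i x, hess (f i) x = ∑ j, ∑ l, (ℓ i x) j l • B i j l)
    (M₁ : ℝ)
    (hℓLip : ∀ i x y, frobNorm (ℓ i x - ℓ i y) ≤ M₁ * ‖x - y‖)
    (NB : ℝ)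
    (hNB : NB = if (∀ i (j l j' l' : Fin d), (j, l) ≠ (j', l') →
        frobInner (B i j l) (B i j' l') = 0) then (1 : ℝ) else (d : ℝ) ^ 2)
    (δ : ℝ) (hδ0 : 0 < δ) (hδ1 : δ ≤ 1)
    (Ac Bc AM BM : ℝ) (hAc : Ac = δ / 4) (hBc : Bc = 6 / δ - 7 / 2)
    (hAM : AM = 1 / 4) (hBM : BM = 5 / 2)
    (x : ℕ → EuclideanSpace ℝ (Fin d))
    (L S : ℕ → Fin n → Matrix (Fin d) (Fin d) ℝ)
    (hS : ∀ k i, frobSq (S k i - (ℓ i (x k) - L k i))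
      ≤ (1 - δ) * frobSq (ℓ i (x k) - L k i))
    (hL : ∀ k i, L (k + 1) i = L k i + S k i)
    (Hmat : ℕ → Matrix (Fin d) (Fin d) ℝ)
    (hHmat : ∀ k, Hmat k = (1 / (n : ℝ)) • ∑ i, ∑ j, ∑ l, (L k i) j l • B i j l)
    (Hhat : ℕ → Matrix (Fin d) (Fin d) ℝ)
    (hHhatsymm : ∀ k, (Hhat k).IsSymm)
    (hHhatpsd : ∀ k, (Hhat k - μ • (1 : Matrix (Fin d) (Fin d) ℝ)).PosSemidef)
    (hHhatproj : ∀ k, frobNorm (Hhat k - hess fbar xstar)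
      ≤ frobNorm (Hmat k - hess fbar xstar))
    (hx : ∀ k, x (k + 1) = x k
      - Matrix.toEuclideanCLM (𝕜 := ℝ) (Hhat k)⁻¹ (gradient fbar (x k)))
    (𝓗 : ℕ → ℝ)
    (h𝓗 : ∀ k, 𝓗 k = (1 / (n : ℝ)) * ∑ i, frobSq (L k i - ℓ i xstar))
    (Φ₂ : ℕ → ℝ)
    (hΦ₂ : ∀ k, Φ₂ k = 𝓗 k + (4 * Bc * M₁ ^ 2 / AM) * ‖x k - xstar‖ ^ 2)
    (θ₁ : ℝ) (hθ₁ : θ₁ = 1 - min (4 * Ac) AM / 4)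
    (hnbr1 : ∀ k, ‖x k - xstar‖ ^ 2 ≤ AM * μ ^ 2 / (4 * H ^ 2 * BM))
    (hnbr2 : ∀ k, 𝓗 k ≤ AM * μ ^ 2 / (16 * NB * R ^ 2 * BM)) :
    (∀ k, Φ₂ k ≤ θ₁ ^ k * Φ₂ 0) ∧
    ((∀ k, x k ≠ xstar) → ∀ k,
      ‖x (k + 1) - xstar‖ ^ 2 / ‖x k - xstar‖ ^ 2
        ≤ θ₁ ^ k * (AM * H ^ 2 / (8 * Bc * M₁ ^ 2 * μ ^ 2)
            + 2 * NB * R ^ 2 / μ ^ 2) * Φ₂ 0) := by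
  subst hfbar
  have hn' : (0 : ℝ) < n := by exact_mod_cast hn
  set g : EuclideanSpace ℝ (Fin d) → ℝ := fun x => (1 / (n : ℝ)) * ∑ i, f i x with hgdef
  have hg : ContDiff ℝ 2 g := contDiff_const.mul (ContDiff.sum fun i _ => hf i)
  have hNB0 : 0 ≤ NB := by rw [hNB]; split_ifs <;> positivity
  have hH0 : ∀ k, 0 ≤ 𝓗 k := fun k => by
    rw [h𝓗]
    refine mul_nonneg (by positivity) (Finset.sum_nonneg fun i _ => ?_)
    rw [frobSq_eq]; positivity
  have hB0 : 0 < Bc := by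
    rw [hBc]
    have : 6 ≤ 6 / δ := by rw [le_div_iff₀ hδ0]; linarith
    linarith
  have hD : ∀ k, frobNorm (Hhat k - hess g xstar) ^ 2 ≤ NB * R ^ 2 * 𝓗 k := by
    intro k
    refine (pow_le_pow_left₀ (Real.sqrt_nonneg _) (hHhatproj k) 2).trans ?_
    have := nb_bound hn R B hBR NB hNB (fun i => L k i - ℓ i xstar)
    rw [← h𝓗] at this
    have e : Hmat k - hess g xstar
        = (1 / (n : ℝ)) • ∑ i, ∑ j, ∑ l, (L k i - ℓ i xstar) j l • B i j l := by
      rw [hHmat, hgdef, hess_avg f hf, ← smul_sub, ← Finset.sum_sub_distrib]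
      simp only [hrep, ← Finset.sum_sub_distrib, Matrix.sub_apply, sub_smul]
    rw [e]
    exact this
  have hLipg : ∀ H' : ℝ, (∀ i x y, specNorm (hess (f i) x - hess (f i) y) ≤ H' * ‖x - y‖) →
      ∀ z, specNorm (hess g z - hess g xstar) ≤ H' * ‖z - xstar‖ := by
    intro H' hH' z
    rw [hgdef, hess_avg f hf, hess_avg f hf, ← smul_sub, ← Finset.sum_sub_distrib, specNorm,
      map_smul, map_sum, norm_smul, Real.norm_eq_abs, abs_of_pos (by positivity)]
    have h1 := (norm_sum_le Finset.univ fun i =>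
      Matrix.toEuclideanCLM (𝕜 := ℝ) (hess (f i) z - hess (f i) xstar)).trans
      (Finset.sum_le_sum fun i _ => hH' i z xstar)
    rw [Finset.sum_const, Finset.card_univ, Fintype.card_fin, nsmul_eq_mul] at h1
    rw [one_div, inv_mul_le_iff₀ hn']
    exact h1
  have hNewton : ∀ H' : ℝ, (∀ i x y, specNorm (hess (f i) x - hess (f i) y) ≤ H' * ‖x - y‖) →
      ∀ k, ‖x (k + 1) - xstar‖ ^ 2 ≤ ‖x k - xstar‖ ^ 2 / μ ^ 2 *
        (2 * (NB * R ^ 2 * 𝓗 k) + H' ^ 2 * ‖x k - xstar‖ ^ 2 / 2) := by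
    intro H' hH' k
    exact newton g hg μ hμ xstar (x k) (x (k + 1)) hstar (Hhat k) (hHhatpsd k) H' _
      (hLipg H' hH') (hD k) (hx k)
  have hHrec : ∀ k, 𝓗 (k + 1) ≤ (1 - δ / 4) * 𝓗 k + Bc * M₁ ^ 2 * ‖x k - xstar‖ ^ 2 := by
    intro k
    have h1 : ∀ i, frobSq (L (k + 1) i - ℓ i xstar) ≤ (1 - δ / 4) * frobSq (L k i - ℓ i xstar)
        + Bc * M₁ ^ 2 * ‖x k - xstar‖ ^ 2 := by
      intro i
      have h2 := hS k i
      have h3 := hℓLip i (x k) xstar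
      rw [frobNorm_eq] at h3
      have h3' := pow_le_pow_left₀ (norm_nonneg _) h3 2
      rw [frobSq_eq, frobSq_eq, map_sub] at h2
      have e : fvec (ℓ i (x k) - L k i)
          = fvec (ℓ i (x k) - ℓ i xstar) - fvec (L k i - ℓ i xstar) := by
        simp only [map_sub]; abel
      rw [e] at h2
      have h4 := contr δ hδ0 hδ1 _ _ _ h2
      rw [← hBc] at h4
      have e2 : fvec (L (k + 1) i - ℓ i xstar) = fvec (L k i - ℓ i xstar) + fvec (S k i) := by
        rw [hL, ← map_add]; congr 1; abel
      rw [frobSq_eq, frobSq_eq, e2]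
      rw [mul_pow] at h3'
      nlinarith [mul_le_mul_of_nonneg_left h3' hB0.le]
    rw [h𝓗, h𝓗]
    have h2 := Finset.sum_le_sum fun (i : Fin n) (_ : i ∈ Finset.univ) => h1 i
    rw [Finset.sum_add_distrib, ← Finset.mul_sum, Finset.sum_const, Finset.card_univ,
      Fintype.card_fin, nsmul_eq_mul] at h2
    have h3 := mul_le_mul_of_nonneg_left h2 (show 0 ≤ 1 / (n : ℝ) by positivity)
    refine h3.trans (le_of_eq ?_)
    field_simp
  have hr40 : ∀ k, ‖x (k + 1) - xstar‖ ^ 2 ≤ ‖x k - xstar‖ ^ 2 / 40 := by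
    intro k
    have h1 : H ^ 2 * ‖x k - xstar‖ ^ 2 / 2 ≤ μ ^ 2 / 80 := by
      by_cases h0 : H = 0
      · rw [h0]; simp; positivity
      · have := hnbr1 k
        have hp : 0 < H ^ 2 := by positivity
        rw [hAM, hBM, le_div_iff₀ (by positivity)] at this
        nlinarith
    have h2 : 2 * (NB * R ^ 2 * 𝓗 k) ≤ μ ^ 2 / 80 := by
      have hp0 : 0 ≤ NB * R ^ 2 := by positivity
      rcases hp0.eq_or_lt with h0 | h0
      · rw [← h0]; simp; positivity
      · have := hnbr2 k
        have e : 16 * NB * R ^ 2 * BM = 40 * (NB * R ^ 2) := by rw [hBM]; ring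
        rw [hAM, e, le_div_iff₀ (by positivity)] at this
        nlinarith
    refine (hNewton H hH k).trans ?_
    rw [div_mul_eq_mul_div, div_le_iff₀ (by positivity)]
    nlinarith [mul_le_mul_of_nonneg_left (add_le_add h2 h1) (sq_nonneg ‖x k - xstar‖)]
  have hC0 : 0 ≤ Bc * M₁ ^ 2 := by positivity
  have hΦ' : ∀ k, Φ₂ k = 𝓗 k + 16 * (Bc * M₁ ^ 2 * ‖x k - xstar‖ ^ 2) := by
    intro k; rw [hΦ₂, hAM]; ring
  have hθa : 1 - δ / 4 ≤ θ₁ := by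
    rw [hθ₁, hAc]; have := min_le_left (4 * (δ / 4)) AM; linarith
  have hθb : 15 / 16 ≤ θ₁ := by
    rw [hθ₁]; have := min_le_right (4 * Ac) AM; linarith
  have hstep : ∀ k, Φ₂ (k + 1) ≤ θ₁ * Φ₂ k := by
    intro k
    rw [hΦ', hΦ']
    have h1 := mul_le_mul_of_nonneg_left (hr40 k) hC0
    have h2 : 0 ≤ Bc * M₁ ^ 2 * ‖x k - xstar‖ ^ 2 := by positivity
    have h3 := mul_le_mul_of_nonneg_right hθa (hH0 k)
    have h4 := mul_le_mul_of_nonneg_right hθb h2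
    have h5 := hHrec k
    nlinarith
  have ha : ∀ k, Φ₂ k ≤ θ₁ ^ k * Φ₂ 0 := by
    intro k
    induction k with
    | zero => simp
    | succ k ih =>
      refine (hstep k).trans ?_
      rw [pow_succ']
      have := mul_le_mul_of_nonneg_left ih (show 0 ≤ θ₁ by linarith)
      linarith
  refine ⟨ha, fun hne k => ?_⟩
  have hr : 0 < ‖x k - xstar‖ ^ 2 := by
    have := norm_pos_iff.2 (sub_ne_zero.2 (hne k)); positivity
  have hq : 0 ≤ NB * R ^ 2 := by positivity
  have hΦH : 𝓗 k ≤ Φ₂ k := by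
    rw [hΦ']; have := mul_nonneg hC0 hr.le; linarith
  set K := AM * H ^ 2 / (8 * Bc * M₁ ^ 2 * μ ^ 2) + 2 * NB * R ^ 2 / μ ^ 2 with hK
  have hK0 : 0 ≤ K := by rw [hK, hAM]; positivity
  suffices hs : ‖x (k + 1) - xstar‖ ^ 2 ≤ ‖x k - xstar‖ ^ 2 * (K * Φ₂ k) by
    rw [div_le_iff₀ hr]
    have h1 := mul_le_mul_of_nonneg_left (mul_le_mul_of_nonneg_left (ha k) hK0) hr.le
    nlinarith
  by_cases hM : M₁ = 0
  · have hz : ∀ i x y, specNorm (hess (f i) x - hess (f i) y) ≤ 0 * ‖x - y‖ := by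
      intro i x y
      have h1 := hℓLip i x y
      rw [hM, zero_mul, frobNorm_eq] at h1
      have h2 : ℓ i x - ℓ i y = 0 := by
        have h3 := norm_le_zero_iff.1 h1
        ext a b
        have := congrArg (fun v : EuclideanSpace ℝ (Fin d × Fin d) => v (a, b)) h3
        simpa [fvec] using this
      rw [hrep, hrep, sub_eq_zero.1 h2]
      simp [specNorm]
    refine (hNewton 0 hz k).trans ?_
    have e : K = 2 * (NB * R ^ 2) / μ ^ 2 := by rw [hK, hM]; ring
    rw [e, div_mul_eq_mul_div, mul_div_assoc]
    refine mul_le_mul_of_nonneg_left ?_ hr.le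
    rw [div_mul_eq_mul_div]
    refine div_le_div_of_nonneg_right ?_ (by positivity)
    nlinarith [mul_le_mul_of_nonneg_left hΦH hq]
  · refine (hNewton H hH k).trans ?_
    rw [div_mul_eq_mul_div, mul_div_assoc]
    refine mul_le_mul_of_nonneg_left ?_ hr.le
    have e : K * Φ₂ k = (H ^ 2 / (32 * (Bc * M₁ ^ 2)) * Φ₂ k
        + 2 * (NB * R ^ 2 * Φ₂ k)) / μ ^ 2 := by
      rw [hK, hAM]; field_simp; ring
    rw [e]
    refine div_le_div_of_nonneg_right ?_ (by positivity)
    have h1 : H ^ 2 * ‖x k - xstar‖ ^ 2 / 2 ≤ H ^ 2 / (32 * (Bc * M₁ ^ 2)) * Φ₂ k := by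
      have hp : 0 < Bc * M₁ ^ 2 := by positivity
      have h2 : 16 * (Bc * M₁ ^ 2 * ‖x k - xstar‖ ^ 2) ≤ Φ₂ k := by
        rw [hΦ']; linarith [hH0 k]
      have h3 := mul_le_mul_of_nonneg_left h2
        (show 0 ≤ H ^ 2 / (32 * (Bc * M₁ ^ 2)) by positivity)
      refine le_trans (le_of_eq ?_) h3
      field_simp; ring
    have h2 := mul_le_mul_of_nonneg_left hΦH hq
    linarith only [h1, h2]
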